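/- Let 2 ≤ p < ∞. There is a constant c > 0 (depending only on p) such that for all d ≥ 2 and all ε ∈ (0, 1/2), the information complexity of L_p-approximation on F_d^log satisfies n(ε, F_d^log, L_p) ≤ c · d · ε^{-3p/2} · log³(ε^{-p}). -/

import Mathlib

open MeasureTheory Real Finset

noncomputable section

/-- The unit cube `[0,1]^d`. -/
def cube (d : ℕ) : Set (Fin d → ℝ) := Set.univ.pi fun _ => Set.Icc 0 1

/-- The trigonometric character `e^{2πi⟨k,x⟩}`. -/
def eK (d : ℕ) (k : Fin d → ℤ) (x : Fin d → ℝ) : ℂ :=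
  Complex.exp (2 * Real.pi * Complex.I * ∑ i, (k i : ℂ) * (x i : ℂ))

/-- The Fourier coefficient `f̂(k) = ∫_{[0,1]^d} f(x) e^{-2πi⟨k,x⟩} dx`. -/
def fCoeff (d : ℕ) (f : (Fin d → ℝ) → ℂ) (k : Fin d → ℤ) : ℂ :=
  ∫ x in cube d, f x * Complex.exp (-(2 * Real.pi * Complex.I) * ∑ i, (k i : ℂ) * (x i : ℂ))

/-- `f` is 1-periodic in each coordinate. -/
def Periodic1 (d : ℕ) (f : (Fin d → ℝ) → ℂ) : Prop :=
  ∀ (x : Fin d → ℝ) (i : Fin d), f (Function.update x i (x i + 1)) = f x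

/-- The weight `max(1, log ‖k‖_∞)`. -/
def logWeight (d : ℕ) (k : Fin d → ℤ) : ℝ :=
  max 1 (Real.log ((Finset.univ.sup fun i => (k i).natAbs : ℕ) : ℝ))

/-- The class `F_d^log` of continuous 1-periodic functions with
`∑_k |f̂(k)| max(1, log ‖k‖_∞) ≤ 1`. -/
def FdLog (d : ℕ) : Set ((Fin d → ℝ) → ℂ) :=
  {f | Continuous f ∧ Periodic1 d f ∧
    Summable (fun k : Fin d → ℤ => ‖fCoeff d f k‖ * logWeight d k) ∧
    ∑' k : Fin d → ℤ, ‖fCoeff d f k‖ * logWeight d k ≤ 1}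

/-! If `f` and `g` in the class agree at the nodes, then `(f - g) / 2` is in the class and vanishes
at the nodes, so it suffices to bound the norm of such functions; as they are bounded by `1`, their
`L²` norm controls their `L^p` norm. Up to an error `2 ^ (-J)` such a function is a trigonometric
polynomial with frequencies in a box of side `exp (2 ^ J)`, and half of it is a convex combination
of finitely many bounded functions. By Maurey's empirical method the average of few of these
functions approximates it well, both on the cube and on the nodes. So only finitely many averages
matter, and by a union bound there are nodes that hit, in the right proportion, the set where such
an average is large, whenever this set is not small. A function that is small at all nodes is then
small on most of the cube; summing over its dyadic level sets bounds the `L²` norm. Averages of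
different lengths at different levels are what keeps the number of nodes low. -/

section Sampling

variable {X : Type*} [MeasurableSpace X] {ι : Type*} [Fintype ι]

/-- The uniform distribution on the points of a finite sample `x`, counted with multiplicity, which
turns counting sample points into measuring sets. It is the zero measure if `ι` is empty. -/
def empiricalMeasure (x : ι → X) : Measure X :=
  (Fintype.card ι : ENNReal)⁻¹ • ∑ i, Measure.dirac (x i)

instance isZeroOrProbabilityMeasure_empiricalMeasure (x : ι → X) :
    IsZeroOrProbabilityMeasure (empiricalMeasure x) := by
  constructor
  rcases isEmpty_or_nonempty ι with _ | _
  · simp [empiricalMeasure]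
  · right
    simp [empiricalMeasure, ENNReal.inv_mul_cancel]

open Classical in
lemma empiricalMeasure_real_apply (x : ι → X) {A : Set X} (hA : MeasurableSet A) :
    (empiricalMeasure x).real A = (#{i | x i ∈ A} : ℝ) / Fintype.card ι := by
  have hcount : ∑ i, A.indicator (1 : X → ENNReal) (x i) = (#{i | x i ∈ A} : ENNReal) := by
    simp [Set.indicator_apply]
  rw [Measure.real, empiricalMeasure, Measure.smul_apply, Measure.finsetSum_apply]
  simp only [Measure.dirac_apply' _ hA, hcount, smul_eq_mul, ENNReal.toReal_mul,
    ENNReal.toReal_inv, ENNReal.toReal_natCast]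
  rw [inv_mul_eq_div]

lemma exists_mem_diff_of_empiricalMeasure_lt {x : ι → X} {A B : Set X} (hA : MeasurableSet A)
    (hB : MeasurableSet B) (h : (empiricalMeasure x).real B < (empiricalMeasure x).real A) :
    ∃ i, x i ∈ A \ B := by
  classical
  contrapose! h
  rw [empiricalMeasure_real_apply x hA, empiricalMeasure_real_apply x hB]
  gcongr ?_ / _
  exact_mod_cast Finset.card_le_card <| Finset.monotone_filter_right _ fun i _ hi =>
    by_contra fun hi' => h i ⟨hi, hi'⟩

variable (μ : Measure X) [IsProbabilityMeasure μ]

lemma integral_exp_neg_indicator_le {E : Set X} (hE : MeasurableSet E) :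
    ∫ y, exp (-E.indicator 1 y) ∂μ ≤ exp (-(μ.real E / 2)) := by
  have hle : ∀ y, exp (-E.indicator 1 y) ≤ 1 - E.indicator (fun _ => (1 / 2 : ℝ)) y := fun y => by
    by_cases hy : y ∈ E
    · simp only [hy, Set.indicator_of_mem, Pi.one_apply]
      linarith [exp_neg_one_lt_d9]
    · simp [hy]
  have hint : Integrable (E.indicator fun _ => (1 / 2 : ℝ)) μ :=
    (integrable_const _).indicator hE
  calc ∫ y, exp (-E.indicator 1 y) ∂μ
      ≤ ∫ y, (1 - E.indicator (fun _ => (1 / 2 : ℝ)) y) ∂μ :=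
        integral_mono_of_nonneg (.of_forall fun y => (exp_pos _).le)
          ((integrable_const _).sub hint) (.of_forall hle)
    _ = -(μ.real E / 2) + 1 := by
        rw [integral_sub (integrable_const _) hint, integral_indicator hE]
        simp only [integral_const, probReal_univ, smul_eq_mul, measureReal_restrict_apply_univ]
        ring
    _ ≤ exp (-(μ.real E / 2)) := add_one_le_exp _

/-- The Chernoff bound with exponential parameter `-1`. -/
lemma measureReal_pi_empiricalMeasure_le {E : Set X} (hE : MeasurableSet E) {q : ℝ}
    (hq : q ≤ μ.real E) :
    (Measure.pi fun _ : ι => μ).real {x | (empiricalMeasure x).real E ≤ q / 4} ≤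
      exp (-(q * Fintype.card ι / 4)) := by
  classical
  set P := Measure.pi fun _ : ι => μ
  set hits : (ι → X) → ℝ := fun x => ∑ i, E.indicator 1 (x i)
  have hexp : ∀ x, exp (-1 * hits x) = ∏ i, exp (-E.indicator 1 (x i)) := fun x => by
    rw [neg_one_mul, ← Finset.sum_neg_distrib, exp_sum]
  have hfactor : Integrable (fun y => exp (-E.indicator (1 : X → ℝ) y)) μ :=
    .of_bound (by fun_prop (disch := assumption)) 1 (.of_forall fun y => by
      by_cases hy : y ∈ E <;> simp [hy])
  have hmgf : ProbabilityTheory.mgf hits P (-1) ≤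
      exp (-(μ.real E / 2)) ^ Fintype.card ι := by
    simp only [ProbabilityTheory.mgf, hexp]
    rw [integral_fintype_prod_eq_pow (fun y => exp (-E.indicator 1 y))]
    gcongr
    exact integral_exp_neg_indicator_le μ hE
  calc P.real {x | (empiricalMeasure x).real E ≤ q / 4}
      ≤ P.real {x | hits x ≤ q * Fintype.card ι / 4} := by
        refine measureReal_mono fun x hx => ?_
        have hhits : hits x = #{i | x i ∈ E} := by simp [hits, Set.indicator_apply]
        rcases isEmpty_or_nonempty ι with _ | _
        · simp [hits]
        · rw [Set.mem_ofPred_eq, empiricalMeasure_real_apply x hE, ← hhits,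
            div_le_iff₀ (by positivity)] at hx
          exact hx.trans_eq (div_mul_eq_mul_div _ _ _)
    _ ≤ exp (-(-1) * (q * Fintype.card ι / 4)) * ProbabilityTheory.mgf hits P (-1) :=
        ProbabilityTheory.measure_le_le_exp_mul_mgf _ (by norm_num)
          (by simpa only [hexp] using Integrable.fintype_prod fun _ => hfactor)
    _ ≤ exp (-(-1) * (q * Fintype.card ι / 4)) * exp (-(μ.real E / 2)) ^ Fintype.card ι := by gcongr
    _ = exp (q * Fintype.card ι / 4 - μ.real E * Fintype.card ι / 2) := by
        rw [← exp_nat_mul, ← exp_add]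
        ring_nf
    _ ≤ exp (-(q * Fintype.card ι / 4)) := by
        gcongr
        linarith [mul_le_mul_of_nonneg_right hq (Nat.cast_nonneg (α := ℝ) (Fintype.card ι))]

lemma exists_sample_forall_lt_empiricalMeasure {V : Type*} [Fintype V] {E : V → Set X}
    (hE : ∀ v, MeasurableSet (E v)) (q : V → ℝ)
    (hsum : ∑ v, exp (-(q v * Fintype.card ι / 4)) < 1) :
    ∃ x : ι → X, ∀ v, q v ≤ μ.real (E v) → q v / 4 < (empiricalMeasure x).real (E v) := by
  classical
  by_contra! hbad
  set bad : V → Set (ι → X) := fun v => {x | (empiricalMeasure x).real (E v) ≤ q v / 4}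
  have hcover : Set.univ ⊆ ⋃ v ∈ ({v | q v ≤ μ.real (E v)} : Finset V), bad v := fun x _ => by
    simpa [bad] using hbad x
  refine hsum.not_ge ?_
  calc 1 = (Measure.pi fun _ : ι => μ).real Set.univ := by simp
    _ ≤ ∑ v with q v ≤ μ.real (E v), (Measure.pi fun _ : ι => μ).real (bad v) :=
        (measureReal_mono hcover (measure_ne_top _ _)).trans (measureReal_biUnion_finset_le _ _)
    _ ≤ ∑ v with q v ≤ μ.real (E v), exp (-(q v * Fintype.card ι / 4)) :=
        Finset.sum_le_sum fun v hv =>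
          measureReal_pi_empiricalMeasure_le μ (hE v) (Finset.mem_filter.mp hv).2
    _ ≤ ∑ v, exp (-(q v * Fintype.card ι / 4)) :=
        Finset.sum_le_univ_sum_of_nonneg fun v => (exp_pos _).le

end Sampling

section Maurey

variable {Y : Type*} [MeasurableSpace Y] (ν : Measure Y) [IsProbabilityMeasure ν]
  (ι : Type*) [Fintype ι]

lemma measureReal_pi_le_sum_sub_integral_le {f : Y → ℝ} (hf : Measurable f)
    (hf_le : ∀ y, |f y| ≤ 1) {r : ℝ} (hr : 0 ≤ r) :
    (Measure.pi fun _ : ι => ν).real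
        {v | Fintype.card ι * r ≤ ∑ j, (f (v j) - ∫ y, f y ∂ν)} ≤
      exp (-(Fintype.card ι * r ^ 2 / 2)) := by
  have hsub : ProbabilityTheory.HasSubgaussianMGF (fun y => f y - ∫ y, f y ∂ν) 1 ν := by
    have hhalf : (‖(1 : ℝ) - -1‖₊ / 2) ^ 2 = 1 := by
      rw [← NNReal.coe_inj]
      norm_num
    simpa only [hhalf] using
      ProbabilityTheory.hasSubgaussianMGF_of_mem_Icc hf.aemeasurable
        (.of_forall fun y => abs_le.mp (hf_le y))
  have hcoord : ∀ j : ι, ProbabilityTheory.HasSubgaussianMGF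
      (fun v : ι → Y => f (v j) - ∫ y, f y ∂ν) 1 (Measure.pi fun _ => ν) := fun j =>
    .of_map (measurable_pi_apply j).aemeasurable
      (by rwa [(measurePreserving_eval (fun _ : ι => ν) j).map_eq])
  refine (ProbabilityTheory.HasSubgaussianMGF.measure_sum_ge_le_of_iIndepFun
    (ProbabilityTheory.iIndepFun_pi fun _ => (hf.sub_const _).aemeasurable)
    (fun j _ => hcoord j) (by positivity)).trans_eq ?_
  rcases isEmpty_or_nonempty ι with _ | _
  · simp
  · simp only [NNReal.coe_natCast, sum_const, card_univ, nsmul_eq_mul, mul_one]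
    field_simp

lemma exists_half_norm_le_re_I_pow_mul (w : ℂ) :
    ∃ k : Fin 4, ‖w‖ / 2 ≤ (Complex.I ^ (k : ℕ) * w).re := by
  by_contra! hlt
  have hre : w.re < ‖w‖ / 2 := by simpa using hlt 0
  have hre_neg : -w.re < ‖w‖ / 2 := by simpa using hlt 2
  have him : w.im < ‖w‖ / 2 := by simpa [pow_succ] using hlt 3
  have him_neg : -w.im < ‖w‖ / 2 := by simpa using hlt 1
  cases abs_cases w.re <;> cases abs_cases w.im <;>
    linarith [Complex.norm_le_abs_re_add_abs_im w]

lemma measureReal_pi_le_norm_sum_sub_integral_le {z : Y → ℂ} (hz : Measurable z)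
    (hz_le : ∀ y, ‖z y‖ ≤ 1) {r : ℝ} (hr : 0 ≤ r) :
    (Measure.pi fun _ : ι => ν).real
        {v | Fintype.card ι * r ≤ ‖∑ j, (z (v j) - ∫ y, z y ∂ν)‖} ≤
      4 * exp (-(Fintype.card ι * r ^ 2 / 8)) := by
  set P := Measure.pi fun _ : ι => ν
  set f : Fin 4 → Y → ℝ := fun k y => (Complex.I ^ (k : ℕ) * z y).re
  have hf_le : ∀ k y, |f k y| ≤ 1 := fun k y =>
    (Complex.abs_re_le_norm _).trans (by simpa using hz_le y)
  have hz_int : Integrable z ν := .of_bound hz.aestronglyMeasurable 1 (.of_forall hz_le)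
  have hf_integral : ∀ k, ∫ y, f k y ∂ν = (Complex.I ^ (k : ℕ) * ∫ y, z y ∂ν).re := fun k => by
    rw [← integral_const_mul]
    exact integral_re (hz_int.const_mul _)
  set tail : Fin 4 → Set (ι → Y) := fun k =>
    {v | Fintype.card ι * (r / 2) ≤ ∑ j, (f k (v j) - ∫ y, f k y ∂ν)}
  have hcover : {v : ι → Y | Fintype.card ι * r ≤ ‖∑ j, (z (v j) - ∫ y, z y ∂ν)‖} ⊆
      ⋃ k, tail k := fun v hv => by
    obtain ⟨k, hk⟩ := exists_half_norm_le_re_I_pow_mul (∑ j, (z (v j) - ∫ y, z y ∂ν))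
    refine Set.mem_iUnion.mpr ⟨k, ?_⟩
    simp only [tail, f, Set.mem_ofPred_eq, hf_integral, ← Complex.sub_re, ← mul_sub,
      ← Complex.re_sum, ← Finset.mul_sum] at hv ⊢
    linarith
  calc P.real {v | Fintype.card ι * r ≤ ‖∑ j, (z (v j) - ∫ y, z y ∂ν)‖}
      ≤ ∑ k, P.real (tail k) := (measureReal_mono hcover).trans (measureReal_iUnion_fintype_le _)
    _ ≤ ∑ _k : Fin 4, exp (-(Fintype.card ι * (r / 2) ^ 2 / 2)) := Finset.sum_le_sum fun k _ =>
        measureReal_pi_le_sum_sub_integral_le ν ι (by fun_prop) (hf_le k) (by positivity)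
    _ = 4 * exp (-(Fintype.card ι * r ^ 2 / 8)) := by
        rw [Finset.sum_const, Finset.card_univ, Fintype.card_fin, nsmul_eq_mul]
        ring_nf

variable {X : Type*} [MeasurableSpace X] (κ : Measure X) [IsFiniteMeasure κ]

lemma exists_measureReal_section_le {A : Set (Y × X)} (hA : MeasurableSet A) {b : ℝ}
    (hb_nonneg : 0 ≤ b) (hb : ∀ x, ν.real {y | (y, x) ∈ A} ≤ b) :
    ∃ y, κ.real {x | (y, x) ∈ A} ≤ b * κ.real Set.univ := by
  obtain ⟨y, hy⟩ := exists_le_lintegral (μ := ν) (f := fun y => κ {x | (y, x) ∈ A})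
    (measurable_measure_prodMk_left hA).aemeasurable
  refine ⟨y, ENNReal.toReal_le_of_le_ofReal (by positivity) ?_⟩
  calc κ {x | (y, x) ∈ A} ≤ ν.prod κ A := hy.trans_eq (Measure.prod_apply hA).symm
    _ = ∫⁻ x, ν {y | (y, x) ∈ A} ∂κ := Measure.prod_apply_symm hA
    _ ≤ ∫⁻ _, ENNReal.ofReal b ∂κ := lintegral_mono fun x => by
      rw [← ofReal_measureReal]
      exact ENNReal.ofReal_le_ofReal (hb x)
    _ = ENNReal.ofReal (b * κ.real Set.univ) := by
      rw [lintegral_const, ENNReal.ofReal_mul' measureReal_nonneg, ofReal_measureReal]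

variable {κ} in
/-- Maurey's empirical method: `h` is the mean of a random element of `s`, so averages of
independent elements concentrate at every point, and by Fubini some draw is close to `h` at most
points. -/
lemma exists_sum_approx_of_mem_convexHull {s : Set (X → ℂ)} (hs : ∀ g ∈ s, Measurable g)
    (hs_le : ∀ g ∈ s, ∀ y, ‖g y‖ ≤ 1) {h : X → ℂ} (hh : h ∈ convexHull ℝ s) {r : ℝ} (hr : 0 ≤ r) :
    ∃ v : ι → X → ℂ, (∀ j, v j ∈ s) ∧
      κ.real {y | Fintype.card ι * r ≤ ‖∑ j, (v j y - h y)‖} ≤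
        4 * exp (-(Fintype.card ι * r ^ 2 / 8)) * κ.real Set.univ := by
  obtain ⟨I, _, w, z, hw, hw_sum, hz, rfl⟩ := mem_convexHull_iff_exists_fintype.mp hh
  let _ : MeasurableSpace I := ⊤
  set pmf : PMF I := .ofFintype (fun i => ENNReal.ofReal (w i))
    (by rw [← ENNReal.ofReal_sum_of_nonneg fun i _ => hw i, hw_sum, ENNReal.ofReal_one])
  have hmean : ∀ y, ∫ i, z i y ∂pmf.toMeasure = (∑ i, w i • z i) y := fun y => by
    rw [PMF.integral_eq_sum]
    simp [pmf, hw]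
  have hjoint : Measurable fun p : (ι → I) × X => ‖∑ j, (z (p.1 j) p.2 - (∑ i, w i • z i) p.2)‖ :=
    measurable_from_prod_countable_right fun v => by
      have hz_meas := fun i => hs _ (hz i)
      simp only [Finset.sum_apply, Pi.smul_apply]
      fun_prop
  obtain ⟨v, hv⟩ := exists_measureReal_section_le (Measure.pi fun _ : ι => pmf.toMeasure) κ
    (b := 4 * exp (-(Fintype.card ι * r ^ 2 / 8)))
    (measurableSet_le (measurable_const (a := Fintype.card ι * r)) hjoint) (by positivity)
    fun y => by
      simpa only [Set.mem_ofPred_eq, hmean] using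
        measureReal_pi_le_norm_sum_sub_integral_le pmf.toMeasure ι (.of_discrete (f := (z · y)))
          (fun i => hs_le _ (hz i) y) hr
  exact ⟨fun j => z (v j), fun j => hz _, hv⟩

end Maurey

section SmallOnSample

variable {X : Type*} [MeasurableSpace X]

lemma measurable_of_mem_convexHull {s : Set (X → ℂ)} (hs : ∀ g ∈ s, Measurable g) {h : X → ℂ}
    (hh : h ∈ convexHull ℝ s) : Measurable h :=
  convexHull_min (t := {h | Measurable h}) hs
    (convex_iff_forall_pos.mpr fun _ hf _ hg a b _ _ _ =>
      Set.mem_ofPred.mpr ((Measurable.const_smul hf a).add (Measurable.const_smul hg b))) hh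

lemma norm_le_one_of_mem_convexHull {Y : Type*} {s : Set (Y → ℂ)} (hs : ∀ g ∈ s, ∀ y, ‖g y‖ ≤ 1)
    {h : Y → ℂ} (hh : h ∈ convexHull ℝ s) (y : Y) : ‖h y‖ ≤ 1 := by
  have hball : s ⊆ LinearMap.proj (R := ℝ) (φ := fun _ => ℂ) y ⁻¹' Metric.closedBall 0 1 :=
    fun g hg => by simpa using hs g hg y
  simpa using convexHull_min hball ((convex_closedBall (0 : ℂ) 1).linear_preimage _) hh

lemma sq_le_add_sum_ite {a : ℝ} (ha_nonneg : 0 ≤ a) (ha_le : a ≤ 1) (J : ℕ) :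
    a ^ 2 ≤ (1 / 4) ^ J + ∑ j ∈ range J, if (1 / 2) ^ (j + 1) ≤ a then (1 / 4) ^ j else 0 := by
  induction J with
  | zero => simpa [abs_of_nonneg ha_nonneg] using ha_le
  | succ J ih =>
    rw [Finset.sum_range_succ]
    split_ifs with hJ
    · linarith [pow_pos (by norm_num : (0 : ℝ) < 1 / 4) (J + 1)]
    · have hsq : a ^ 2 ≤ (1 / 4) ^ (J + 1) := by
        calc a ^ 2 ≤ ((1 / 2) ^ (J + 1)) ^ 2 := by gcongr; exact (not_le.mp hJ).le
          _ = (1 / 4) ^ (J + 1) := by rw [pow_right_comm]; norm_num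
      have hsum : 0 ≤ ∑ j ∈ range J, if (1 / 2) ^ (j + 1) ≤ a then (1 / 4 : ℝ) ^ j else 0 :=
        Finset.sum_nonneg fun j _ => by positivity
      linarith

variable (μ : Measure X) [IsProbabilityMeasure μ]

lemma integral_norm_sq_le_add_sum {h : X → ℂ} (hh : Measurable h) (hh_le : ∀ y, ‖h y‖ ≤ 1)
    (J : ℕ) : ∫ y, ‖h y‖ ^ 2 ∂μ ≤
      (1 / 4) ^ J + ∑ j ∈ range J, (1 / 4) ^ j * μ.real {y | (1 / 2) ^ (j + 1) ≤ ‖h y‖} := by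
  set A : ℕ → Set X := fun j => {y | (1 / 2) ^ (j + 1) ≤ ‖h y‖}
  have hA : ∀ j, MeasurableSet (A j) := fun j => measurableSet_le measurable_const hh.norm
  have hint : ∀ j, Integrable ((A j).indicator fun _ => (1 / 4 : ℝ) ^ j) μ := fun j =>
    (integrable_const _).indicator (hA j)
  calc ∫ y, ‖h y‖ ^ 2 ∂μ
      ≤ ∫ y, ((1 / 4) ^ J + ∑ j ∈ range J, (A j).indicator (fun _ => (1 / 4) ^ j) y) ∂μ :=
        integral_mono_of_nonneg (.of_forall fun y => by positivity)
          ((integrable_const _).add (integrable_finsetSum _ fun j _ => hint j))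
          (.of_forall fun y => sq_le_add_sum_ite (norm_nonneg _) (hh_le y) J)
    _ = (1 / 4) ^ J + ∑ j ∈ range J, (1 / 4) ^ j * μ.real (A j) := by
        rw [integral_add (integrable_const _) (integrable_finsetSum _ fun j _ => hint j),
          integral_finsetSum _ fun j _ => hint j]
        simp [integral_indicator (hA _), mul_comm]

variable {ι I : Type*} [Fintype ι] {g : I → X → ℂ}

lemma exists_sum_approx_sample (hg : ∀ i, Measurable (g i)) (hg_le : ∀ i y, ‖g i y‖ ≤ 1)
    {h : X → ℂ} (hh : h ∈ convexHull ℝ (Set.range g)) (x : ι → X) (L : ℕ) {r : ℝ} (hr : 0 ≤ r) :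
    ∃ u : Fin L → I,
      μ.real {y | L * r ≤ ‖∑ j, g (u j) y - L * h y‖} +
        (empiricalMeasure x).real {y | L * r ≤ ‖∑ j, g (u j) y - L * h y‖} ≤
      8 * exp (-(L * r ^ 2 / 8)) := by
  obtain ⟨v, hv, hclose⟩ := exists_sum_approx_of_mem_convexHull (κ := μ + empiricalMeasure x)
    (Fin L) (Set.forall_mem_range.mpr hg) (Set.forall_mem_range.mpr hg_le) hh hr
  choose u hu using hv
  obtain rfl : (fun j => g (u j)) = v := funext hu
  simp only [Finset.sum_sub_distrib, Finset.sum_const, Finset.card_univ, Fintype.card_fin,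
    nsmul_eq_mul] at hclose
  rw [measureReal_add_apply, measureReal_add_apply, probReal_univ] at hclose
  refine ⟨u, hclose.trans ?_⟩
  calc 4 * exp (-(L * r ^ 2 / 8)) * (1 + (empiricalMeasure x).real Set.univ)
      ≤ 4 * exp (-(L * r ^ 2 / 8)) * (1 + 1) := by
        gcongr
        exact measureReal_le_one
    _ = 8 * exp (-(L * r ^ 2 / 8)) := by ring

lemma measureReal_superlevel_le_of_norm_sample_le (hg : ∀ i, Measurable (g i))
    (hg_le : ∀ i y, ‖g i y‖ ≤ 1) {x : ι → X} {t m : ℝ} (ht : 0 ≤ t) {L : ℕ}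
    (hL : 64 * exp (-(L * t ^ 2 / 128)) < m)
    (hx : ∀ v : Fin L → I, m / 2 ≤ μ.real {y | L * (3 * t / 4) ≤ ‖∑ j, g (v j) y‖} →
      m / 2 / 4 < (empiricalMeasure x).real {y | L * (3 * t / 4) ≤ ‖∑ j, g (v j) y‖})
    {h : X → ℂ} (hh : h ∈ convexHull ℝ (Set.range g)) (hhx : ∀ i, ‖h (x i)‖ ≤ t / 2) :
    μ.real {y | t ≤ ‖h y‖} ≤ m := by
  obtain ⟨u, hu⟩ := exists_sum_approx_sample μ hg hg_le hh x L (r := t / 4) (by positivity)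
  have hh_meas := measurable_of_mem_convexHull (Set.forall_mem_range.mpr hg) hh
  set far : Set X := {y | L * (t / 4) ≤ ‖∑ j, g (u j) y - L * h y‖}
  set big : Set X := {y | L * (3 * t / 4) ≤ ‖∑ j, g (u j) y‖}
  have hfar_meas : MeasurableSet far := measurableSet_le measurable_const (by fun_prop)
  have hbig_meas : MeasurableSet big := measurableSet_le measurable_const (by fun_prop)
  have hfar_le : μ.real far + (empiricalMeasure x).real far < m / 8 := by
    refine hu.trans_lt ?_
    rw [div_pow, mul_div_assoc', div_div]
    norm_num
    linarith
  have hm : 0 < m := by linarith [exp_pos (-(L * t ^ 2 / 128))]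
  have hL_nonneg : (0 : ℝ) ≤ L := Nat.cast_nonneg L
  have hnorm : ∀ y, ‖(L * h y : ℂ)‖ = L * ‖h y‖ := fun y => by
    rw [norm_mul, Complex.norm_natCast]
  have hcover : {y | t ≤ ‖h y‖} ⊆ big ∪ far := fun y hy => by
    by_contra hmem
    simp only [Set.mem_union, not_or, big, far, Set.mem_ofPred_eq, not_le] at hmem hy
    have htri := norm_sub_norm_le (L * h y) (∑ j, g (u j) y)
    rw [norm_sub_rev, hnorm] at htri
    linarith [mul_le_mul_of_nonneg_left hy hL_nonneg]
  by_contra! hlt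
  have hbig_large : m / 2 ≤ μ.real big := by
    linarith [measureReal_mono hcover (μ := μ), measureReal_union_le big far (μ := μ),
      measureReal_nonneg (μ := empiricalMeasure x) (s := far)]
  obtain ⟨i, hi_big, hi_far⟩ := exists_mem_diff_of_empiricalMeasure_lt hbig_meas hfar_meas
    ((by linarith [measureReal_nonneg (μ := μ) (s := far)] : _ < m / 2 / 4).trans
      (hx u hbig_large))
  simp only [big, far, Set.mem_ofPred_eq, not_le] at hi_big hi_far
  have htri := norm_sub_norm_le (∑ j, g (u j) (x i)) (L * h (x i))
  rw [hnorm] at htri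
  linarith [mul_le_mul_of_nonneg_left (hhx i) hL_nonneg]

/-- The measure allowed for `{y | (1 / 2) ^ (j + 1) ≤ ‖h y‖}`, chosen so that each of the `J` dyadic
levels contributes the same amount `4 / (4 ^ J * J)` to the bound on `∫ ‖h‖ ^ 2`. -/
def levelMass (J j : ℕ) : ℝ := 4 ^ (j + 1) / (4 ^ J * J)

/-- The number of atoms averaged by the empirical method at the level `(1 / 2) ^ (j + 1)`, chosen so
that Hoeffding's inequality fails there with probability of order `exp (-8 * J)`. -/
def levelLength (J j : ℕ) : ℕ := 1024 * J * 4 ^ (j + 1)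

lemma integral_norm_sq_le_of_superlevel_le {h : X → ℂ} (hh : Measurable h)
    (hh_le : ∀ y, ‖h y‖ ≤ 1) {J : ℕ} (hJ : J ≠ 0)
    (hlevel : ∀ j < J, μ.real {y | (1 / 2) ^ (j + 1) ≤ ‖h y‖} ≤ levelMass J j) :
    ∫ y, ‖h y‖ ^ 2 ∂μ ≤ 5 * (1 / 4) ^ J := by
  calc ∫ y, ‖h y‖ ^ 2 ∂μ
      ≤ (1 / 4) ^ J + ∑ j ∈ range J, (1 / 4) ^ j * μ.real {y | (1 / 2) ^ (j + 1) ≤ ‖h y‖} :=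
        integral_norm_sq_le_add_sum μ hh hh_le J
    _ ≤ (1 / 4) ^ J + ∑ j ∈ range J, (1 / 4) ^ j * levelMass J j := by
        gcongr with j hj
        exact hlevel j (Finset.mem_range.mp hj)
    _ = (1 / 4) ^ J + ∑ j ∈ range J, 4 / (4 ^ J * J : ℝ) := by
        congr 1
        refine Finset.sum_congr rfl fun j _ => ?_
        rw [levelMass, pow_succ, one_div_pow]
        field_simp
    _ = 5 * (1 / 4) ^ J := by
        rw [Finset.sum_const, Finset.card_range, nsmul_eq_mul, one_div_pow]
        field_simp
        norm_num

lemma exp_neg_lt_levelMass {J : ℕ} (hJ : J ≠ 0) (j : ℕ) :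
    64 * exp (-(levelLength J j * ((1 / 2) ^ (j + 1)) ^ 2 / 128)) < levelMass J j := by
  have hexponent : (levelLength J j * ((1 / 2) ^ (j + 1)) ^ 2 / 128 : ℝ) = J * 8 := by
    have hpow : (4 : ℝ) ^ (j + 1) * ((1 / 2) ^ (j + 1)) ^ 2 = 1 := by
      rw [pow_right_comm, ← mul_pow]
      norm_num
    rw [levelLength]
    push_cast
    linear_combination 8 * J * hpow
  have hexp : (256 : ℝ) ^ J ≤ exp (J * 8) := by
    rw [exp_nat_mul]
    gcongr
    calc (256 : ℝ) = 2 ^ 8 := by norm_num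
      _ ≤ exp 1 ^ 8 := by gcongr; exact exp_one_gt_two.le
      _ = exp 8 := by rw [← exp_nat_mul]; norm_num
  have hJ_lt : (J : ℝ) < 4 ^ J := mod_cast Nat.lt_pow_self (by norm_num)
  have h16 : (16 : ℝ) ≤ 16 ^ J := le_self_pow₀ (by norm_num) hJ
  calc 64 * exp (-(levelLength J j * ((1 / 2) ^ (j + 1)) ^ 2 / 128))
      = 64 / exp (J * 8) := by rw [hexponent, exp_neg, div_eq_mul_inv]
    _ ≤ 64 / 256 ^ J := by gcongr
    _ = 4 * 16 / (4 ^ J * 4 ^ J * 16 ^ J) := by rw [← mul_pow, ← mul_pow]; norm_num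
    _ ≤ 4 * 16 ^ J / (4 ^ J * 4 ^ J * 16 ^ J) := by gcongr
    _ = 4 / (4 ^ J * 4 ^ J) := by field_simp
    _ < 4 / (4 ^ J * J) := by gcongr
    _ ≤ levelMass J j := by
        rw [levelMass]
        gcongr
        exact le_self_pow₀ (by norm_num) (by omega)

lemma sum_exp_neg_levelMass_lt_one [Fintype I] [Nonempty I] {J : ℕ} (hJ : J ≠ 0) {n : ℝ}
    (hn : 8 * J ^ 2 * 4 ^ J * (1024 * log (Fintype.card I) + 1) ≤ n) :
    ∑ v : Σ j : Fin J, (Fin (levelLength J j) → I), exp (-(levelMass J v.1 / 2 * n / 4)) < 1 := by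
  have hlevel : ∀ j : Fin J, (Fintype.card I : ℝ) ^ levelLength J j *
      exp (-(levelMass J j / 2 * n / 4)) ≤ exp (-J) := fun j => by
    have hmass : (4 ^ (j + 1 : ℕ) : ℝ) * J * (1024 * log (Fintype.card I) + 1) ≤
        levelMass J j / 2 * n / 4 := by
      calc (4 ^ (j + 1 : ℕ) : ℝ) * J * (1024 * log (Fintype.card I) + 1)
          = levelMass J j * (8 * J ^ 2 * 4 ^ J * (1024 * log (Fintype.card I) + 1)) / 8 := by
            rw [levelMass]
            field_simp
        _ ≤ levelMass J j * n / 8 := by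
            have hpos : 0 ≤ levelMass J j := by unfold levelMass; positivity
            gcongr
        _ = levelMass J j / 2 * n / 4 := by ring
    have hJ_le : (J : ℝ) ≤ 4 ^ (j + 1 : ℕ) * J :=
      le_mul_of_one_le_left (Nat.cast_nonneg J) (one_le_pow₀ (by norm_num))
    rw [← rpow_natCast, rpow_def_of_pos (by positivity), ← exp_add]
    gcongr
    rw [levelLength]
    push_cast
    linarith
  calc ∑ v : Σ j : Fin J, (Fin (levelLength J j) → I), exp (-(levelMass J v.1 / 2 * n / 4))
      = ∑ j : Fin J, (Fintype.card I : ℝ) ^ levelLength J j *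
          exp (-(levelMass J j / 2 * n / 4)) := by
        simp [Fintype.sum_sigma]
    _ ≤ ∑ _j : Fin J, exp (-J) := Finset.sum_le_sum fun j _ => hlevel j
    _ = J / exp J := by simp [exp_neg, div_eq_mul_inv]
    _ < 1 := (div_lt_one (exp_pos _)).mpr ((lt_add_one _).trans_le (add_one_le_exp _))

lemma exists_sample_integral_norm_sq_le [Fintype I] [Nonempty I] (hg : ∀ i, Measurable (g i))
    (hg_le : ∀ i y, ‖g i y‖ ≤ 1) {J : ℕ} (hJ : J ≠ 0)
    (hcard : 8 * J ^ 2 * 4 ^ J * (1024 * log (Fintype.card I) + 1) ≤ Fintype.card ι) :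
    ∃ x : ι → X, ∀ h ∈ convexHull ℝ (Set.range g), (∀ i, ‖h (x i)‖ ≤ (1 / 2) ^ (J + 1)) →
      ∫ y, ‖h y‖ ^ 2 ∂μ ≤ 5 * (1 / 4) ^ J := by
  obtain ⟨x, hx⟩ := exists_sample_forall_lt_empiricalMeasure μ (ι := ι)
    (E := fun v : Σ j : Fin J, (Fin (levelLength J j) → I) =>
      {y | levelLength J v.1 * (3 * (1 / 2) ^ (v.1 + 1 : ℕ) / 4) ≤ ‖∑ j, g (v.2 j) y‖})
    (fun v => measurableSet_le measurable_const (by fun_prop))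
    (fun v => levelMass J v.1 / 2) (sum_exp_neg_levelMass_lt_one hJ hcard)
  refine ⟨x, fun h hh hhx => integral_norm_sq_le_of_superlevel_le μ
    (measurable_of_mem_convexHull (Set.forall_mem_range.mpr hg) hh)
    (norm_le_one_of_mem_convexHull (Set.forall_mem_range.mpr hg_le) hh) hJ fun j hj => ?_⟩
  have hlevel : (1 / 2 : ℝ) ^ (J + 1) ≤ (1 / 2) ^ (j + 1) / 2 := by
    rw [div_eq_mul_one_div ((1 / 2) ^ (j + 1)), ← pow_succ]
    exact pow_le_pow_of_le_one (by norm_num) (by norm_num) (by omega)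
  exact measureReal_superlevel_le_of_norm_sample_le μ hg hg_le (by positivity)
    (exp_neg_lt_levelMass hJ j) (fun v => hx ⟨⟨j, hj⟩, v⟩) hh fun i => (hhx i).trans hlevel

end SmallOnSample

section PhaseDictionary

variable {X K : Type*}

/-- The functions `0` and `I ^ s * e k` for `s < 4`, whose real convex hull contains half of every
complex combination `∑ k, c k * e k` with `∑ k, ‖c k‖ ≤ 1`. -/
def phaseDictionary (e : K → X → ℂ) : Option (K × Fin 4) → X → ℂ
  | none => 0
  | some (k, s) => fun y => Complex.I ^ (s : ℕ) * e k y

lemma measurable_phaseDictionary [MeasurableSpace X] {e : K → X → ℂ} (he : ∀ k, Measurable (e k)) :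
    ∀ a, Measurable (phaseDictionary e a)
  | none => measurable_const
  | some (k, _) => (he k).const_mul _

lemma norm_phaseDictionary_le {e : K → X → ℂ} (he : ∀ k y, ‖e k y‖ ≤ 1) :
    ∀ a y, ‖phaseDictionary e a y‖ ≤ 1
  | none, _ => by simp [phaseDictionary]
  | some (k, s), y => by simpa [phaseDictionary] using he k y

lemma sum_max_re_mul_I_pow (z : ℂ) :
    ∑ s : Fin 4, ((max ((-Complex.I) ^ (s : ℕ) * z).re 0 : ℝ) : ℂ) * Complex.I ^ (s : ℕ) = z := by
  have hre := max_zero_sub_max_neg_zero_eq_self z.re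
  have him := max_zero_sub_max_neg_zero_eq_self z.im
  refine Complex.ext ?_ ?_
  · simpa [Fin.sum_univ_four, pow_succ, sub_eq_add_neg] using hre
  · simpa [Fin.sum_univ_four, pow_succ, sub_eq_add_neg] using him

lemma sum_max_re_le (z : ℂ) :
    ∑ s : Fin 4, max ((-Complex.I) ^ (s : ℕ) * z).re 0 ≤ 2 * ‖z‖ := by
  calc ∑ s : Fin 4, max ((-Complex.I) ^ (s : ℕ) * z).re 0
      = max z.re 0 + max z.im 0 + max (-z.re) 0 + max (-z.im) 0 := by
        simp [Fin.sum_univ_four, pow_succ]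
    _ = |z.re| + |z.im| := by
        rw [← max_zero_add_max_neg_zero_eq_abs_self, ← max_zero_add_max_neg_zero_eq_abs_self]
        ring
    _ ≤ 2 * ‖z‖ := by linarith [Complex.abs_re_le_norm z, Complex.abs_im_le_norm z]

lemma half_sum_mem_convexHull_phaseDictionary [Fintype K] (e : K → X → ℂ) {c : K → ℂ}
    (hc : ∑ k, ‖c k‖ ≤ 1) :
    (fun y => 1 / 2 * ∑ k, c k * e k y) ∈ convexHull ℝ (Set.range (phaseDictionary e)) := by
  set w : K × Fin 4 → ℝ := fun a => max ((-Complex.I) ^ (a.2 : ℕ) * c a.1).re 0 / 2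
  have hw_sum : ∑ a, w a ≤ 1 := by
    rw [Fintype.sum_prod_type]
    refine (Finset.sum_le_sum fun k _ => ?_).trans hc
    rw [← Finset.sum_div]
    linarith [sum_max_re_le (c k)]
  refine mem_convexHull_of_exists_fintype (fun a => a.elim (1 - ∑ a, w a) w) (phaseDictionary e)
    (fun a => ?_) ?_ Set.mem_range_self ?_
  · cases a with
    | none => exact sub_nonneg.mpr hw_sum
    | some a => exact div_nonneg (le_max_right _ _) zero_le_two
  · simp [Fintype.sum_option]
  · ext y
    have hphase : ∀ k, ∑ s : Fin 4, (w (k, s) : ℂ) * (Complex.I ^ (s : ℕ) * e k y) =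
        1 / 2 * (c k * e k y) := fun k => by
      conv_rhs => rw [← sum_max_re_mul_I_pow (c k), Finset.sum_mul, Finset.mul_sum]
      refine Finset.sum_congr rfl fun s _ => ?_
      simp only [w, Complex.ofReal_div, Complex.ofReal_ofNat]
      ring
    simp [Fintype.sum_option, phaseDictionary, Fintype.sum_prod_type, Finset.sum_apply, hphase,
      Finset.mul_sum]

variable [MeasurableSpace X] (μ : Measure X) [IsProbabilityMeasure μ] {ι : Type*} [Fintype ι]

lemma exists_sample_integral_norm_sq_le_of_approx [Fintype K] {e : K → X → ℂ}
    (he : ∀ k, Measurable (e k)) (he_le : ∀ k y, ‖e k y‖ ≤ 1) {J : ℕ} (hJ : J ≠ 0)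
    (hcard : 8 * J ^ 2 * 4 ^ J * (1024 * log (4 * Fintype.card K + 1) + 1) ≤ Fintype.card ι) :
    ∃ x : ι → X, ∀ (c : K → ℂ) (h : X → ℂ), ∑ k, ‖c k‖ ≤ 1 →
      (∀ y, ‖h y - ∑ k, c k * e k y‖ ≤ (1 / 2) ^ J) → (∀ i, h (x i) = 0) →
        ∫ y, ‖h y‖ ^ 2 ∂μ ≤ 42 * (1 / 4) ^ J := by
  obtain ⟨x, hx⟩ := exists_sample_integral_norm_sq_le μ (ι := ι) (measurable_phaseDictionary he)
    (norm_phaseDictionary_le he_le) hJ (by simpa [mul_comm] using hcard)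
  refine ⟨x, fun c h hc hclose hzero => ?_⟩
  set u : X → ℂ := fun y => 1 / 2 * ∑ k, c k * e k y
  have hu_mem := half_sum_mem_convexHull_phaseDictionary e hc
  have hu_sample : ∀ i, ‖u (x i)‖ ≤ (1 / 2) ^ (J + 1) := fun i => by
    have := hclose (x i)
    rw [hzero, zero_sub, norm_neg] at this
    simpa [u, pow_succ'] using this
  have hu_int : Integrable (fun y => ‖u y‖ ^ 2) μ := by
    refine .of_bound (by fun_prop) 1 (.of_forall fun y => ?_)
    have hu_le := norm_le_one_of_mem_convexHull
      (Set.forall_mem_range.mpr (norm_phaseDictionary_le he_le)) hu_mem y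
    simpa only [norm_pow, norm_norm] using pow_le_one₀ (n := 2) (norm_nonneg _) hu_le
  have hpoint : ∀ y, ‖h y‖ ^ 2 ≤ 8 * ‖u y‖ ^ 2 + 2 * (1 / 4) ^ J := fun y => by
    have htri : ‖h y‖ ≤ 2 * ‖u y‖ + (1 / 2) ^ J := by
      have hu2 : 2 * ‖u y‖ = ‖∑ k, c k * e k y‖ := by simp [u]
      linarith [norm_le_norm_add_norm_sub (∑ k, c k * e k y) (h y), hclose y,
        norm_sub_rev (h y) (∑ k, c k * e k y)]
    calc ‖h y‖ ^ 2 ≤ (2 * ‖u y‖ + (1 / 2) ^ J) ^ 2 := by gcongr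
      _ ≤ 2 * ((2 * ‖u y‖) ^ 2 + ((1 / 2) ^ J) ^ 2) := add_sq_le
      _ = 8 * ‖u y‖ ^ 2 + 2 * (1 / 4) ^ J := by rw [pow_right_comm]; norm_num; ring
  calc ∫ y, ‖h y‖ ^ 2 ∂μ ≤ ∫ y, (8 * ‖u y‖ ^ 2 + 2 * (1 / 4) ^ J) ∂μ :=
        integral_mono_of_nonneg (.of_forall fun y => by positivity)
          ((hu_int.const_mul 8).add (integrable_const _)) (.of_forall hpoint)
    _ = 8 * ∫ y, ‖u y‖ ^ 2 ∂μ + 2 * (1 / 4) ^ J := by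
        rw [integral_add (hu_int.const_mul 8) (integrable_const _), integral_const_mul]
        simp
    _ ≤ 42 * (1 / 4) ^ J := by linarith [hx u hu_mem hu_sample]

end PhaseDictionary

section Fourier

variable {d : ℕ} {f g : (Fin d → ℝ) → ℂ}

lemma isCompact_cube (d : ℕ) : IsCompact (cube d) :=
  isCompact_univ_pi fun _ => isCompact_Icc

instance isProbabilityMeasure_restrict_cube (d : ℕ) :
    IsProbabilityMeasure ((volume : Measure (Fin d → ℝ)).restrict (cube d)) :=
  ⟨by rw [Measure.restrict_apply_univ, cube, volume_pi_pi]; simp⟩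

lemma restrict_cube_eq_restrict_pi_Ioc (d : ℕ) :
    (volume : Measure (Fin d → ℝ)).restrict (cube d) =
      volume.restrict (Set.univ.pi fun _ => Set.Ioc 0 1) := by
  rw [cube, volume_pi, Measure.restrict_pi_pi, Measure.restrict_pi_pi]
  simp only [restrict_Ioc_eq_restrict_Icc]

lemma Periodic1.periodic_sum_zsmul_single (hf : Periodic1 d f) (n : Fin d → ℤ) :
    Function.Periodic f (∑ i, n i • Pi.single i 1) := by
  refine Finset.sum_induction _ (Function.Periodic f) (fun _ _ => Function.Periodic.add_period)
    (fun x => by rw [add_zero]) fun i _ => Function.Periodic.zsmul (fun x => ?_) (n i)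
  rw [← hf x i, Pi.update_eq_sub_add_single, Pi.single_add]
  congr 1
  abel

lemma Periodic1.apply_eq_of_coe_eq (hf : Periodic1 d f) {x y : Fin d → ℝ}
    (hxy : ∀ i, (x i : UnitAddCircle) = y i) : f x = f y := by
  have hdiff : ∀ i, ∃ n : ℤ, n • (1 : ℝ) = x i - y i := fun i => by
    rw [← AddCircle.coe_eq_zero_iff, AddCircle.coe_sub, sub_eq_zero]
    exact hxy i
  choose n hn using hdiff
  have hx : x = y + ∑ i, n i • Pi.single i 1 := by
    simp_rw [← Pi.single_smul, hn, Finset.univ_sum_single (fun i => x i - y i)]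
    ext i
    simp
  rw [hx]
  exact hf.periodic_sum_zsmul_single n y

lemma Periodic1.apply_fract (hf : Periodic1 d f) (x : Fin d → ℝ) :
    f (fun i => Int.fract (x i)) = f x :=
  hf.apply_eq_of_coe_eq fun i => AddCircle.coe_fract (x i)

lemma mFourier_coe_eq_eK (k : Fin d → ℤ) (x : Fin d → ℝ) :
    UnitAddTorus.mFourier k (fun i => (x i : UnitAddCircle)) = eK d k x := by
  simp only [UnitAddTorus.mFourier, ContinuousMap.coe_mk, fourier_coe_apply, eK,
    ← Complex.exp_sum, Finset.mul_sum]
  congr! 2 with i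
  push_cast
  ring

lemma norm_eK (k : Fin d → ℤ) (x : Fin d → ℝ) : ‖eK d k x‖ = 1 := by
  have hphase : (2 * Real.pi * Complex.I * ∑ i, (k i : ℂ) * (x i : ℂ)) =
      (2 * Real.pi * ∑ i, (k i : ℝ) * x i : ℝ) * Complex.I := by
    push_cast
    ring
  rw [eK, hphase, Complex.norm_exp_ofReal_mul_I]

lemma measurable_eK (k : Fin d → ℤ) : Measurable (eK d k) := by
  unfold eK
  fun_prop

lemma exists_unitAddTorus_lift (hf : Continuous f) (hper : Periodic1 d f) :
    ∃ F : C(UnitAddTorus (Fin d), ℂ),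
      ∀ x : Fin d → ℝ, F (fun i => (x i : UnitAddCircle)) = f x := by
  set q : (Fin d → ℝ) → UnitAddTorus (Fin d) := Pi.map fun _ (t : ℝ) => (t : UnitAddCircle)
  have hq : IsOpenQuotientMap q := .piMap fun _ => QuotientAddGroup.isOpenQuotientMap_mk
  have hlift : (f ∘ Function.surjInv hq.surjective) ∘ q = f :=
    funext fun x => hper.apply_eq_of_coe_eq (congrFun (Function.surjInv_eq hq.surjective _))
  exact ⟨⟨_, hq.continuous_comp_iff.mp (hlift ▸ hf)⟩, congrFun hlift⟩

lemma mFourierCoeff_eq_fCoeff {F : UnitAddTorus (Fin d) → ℂ}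
    (hF : ∀ x : Fin d → ℝ, F (fun i => (x i : UnitAddCircle)) = f x) (k : Fin d → ℤ) :
    UnitAddTorus.mFourierCoeff F k = fCoeff d f k := by
  have hbox : {x : Fin d → ℝ | ∀ i, x i ∈ Set.Ioc ((0 : Fin d → ℝ) i) ((0 : Fin d → ℝ) i + 1)} =
      Set.univ.pi fun _ => Set.Ioc 0 1 := by
    ext x
    simp
  rw [UnitAddTorus.mFourierCoeff_eq_integral F k 0, fCoeff, restrict_cube_eq_restrict_pi_Ioc, hbox]
  refine integral_congr_ae (.of_forall fun x => ?_)
  simp only [mFourier_coe_eq_eK, hF, smul_eq_mul, mul_comm (f x), eK]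
  simp

lemma hasSum_fCoeff_mul_eK (hf : Continuous f) (hper : Periodic1 d f)
    (hsum : Summable fun k => ‖fCoeff d f k‖) (x : Fin d → ℝ) :
    HasSum (fun k => fCoeff d f k * eK d k x) (f x) := by
  obtain ⟨F, hF⟩ := exists_unitAddTorus_lift hf hper
  have hcoeff := mFourierCoeff_eq_fCoeff hF
  have hF_sum : Summable (UnitAddTorus.mFourierCoeff F) :=
    .of_norm (by simpa only [hcoeff] using hsum)
  have hinv := UnitAddTorus.hasSum_mFourier_series_apply_of_summable hF_sum
    fun i => (x i : UnitAddCircle)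
  simpa only [hcoeff, hF, mFourier_coe_eq_eK, smul_eq_mul] using hinv

end Fourier

section Truncation

variable {K : Type*} {c e : K → ℂ} {w : K → ℝ} {z : ℂ}

lemma norm_sub_sum_le_one_div (he : ∀ k, ‖e k‖ ≤ 1) (hw : ∀ k, 0 ≤ w k)
    (hz : HasSum (fun k => c k * e k) z) (hcw : Summable fun k => ‖c k‖ * w k)
    (hcw_le : ∑' k, ‖c k‖ * w k ≤ 1) {Λ : Finset K} {R : ℝ} (hR : 0 < R)
    (hΛ : ∀ k ∉ Λ, R ≤ w k) : ‖z - ∑ k ∈ Λ, c k * e k‖ ≤ 1 / R := by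
  have htail : HasSum (fun k : {k // k ∉ Λ} => c k * e k) (z - ∑ k ∈ Λ, c k * e k) :=
    (Finset.hasSum_compl_iff (f := fun k => c k * e k) Λ).mpr (by rwa [sub_add_cancel])
  have hbound : ∀ k : {k // k ∉ Λ}, ‖c k * e k‖ ≤ ‖c k‖ * w k / R := fun k => by
    rw [norm_mul, mul_div_assoc]
    gcongr
    exact (he k).trans ((one_le_div hR).mpr (hΛ k k.2))
  have htail_le : ∑' k : {k // k ∉ Λ}, ‖c k‖ * w k ≤ 1 :=
    (hcw.tsum_subtype_le _ {k | k ∉ Λ} fun k => mul_nonneg (norm_nonneg _) (hw k)).trans hcw_le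
  exact (htail.norm_le_of_bounded ((hcw.subtype {k | k ∉ Λ}).hasSum.div_const R) hbound).trans
    (div_le_div_of_nonneg_right htail_le hR.le)

end Truncation

section LogWeightClass

variable {d : ℕ} {f g : (Fin d → ℝ) → ℂ}

lemma one_le_logWeight (d : ℕ) (k : Fin d → ℤ) : 1 ≤ logWeight d k :=
  le_max_left _ _

lemma logWeight_nonneg (d : ℕ) (k : Fin d → ℤ) : 0 ≤ logWeight d k :=
  zero_le_one.trans (one_le_logWeight d k)

lemma fCoeff_half_sub (hf : Continuous f) (hg : Continuous g) (k : Fin d → ℤ) :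
    fCoeff d (fun x => 1 / 2 * (f x - g x)) k = 1 / 2 * (fCoeff d f k - fCoeff d g k) := by
  simp only [fCoeff]
  rw [← integral_sub, ← integral_const_mul]
  · congr! 2
    ring
  all_goals exact ContinuousOn.integrableOn_compact (isCompact_cube d) (by fun_prop)

lemma half_sub_mem_FdLog (hf : f ∈ FdLog d) (hg : g ∈ FdLog d) :
    (fun x => 1 / 2 * (f x - g x)) ∈ FdLog d := by
  obtain ⟨hf_cont, hf_per, hf_sum, hf_le⟩ := hf
  obtain ⟨hg_cont, hg_per, hg_sum, hg_le⟩ := hg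
  have hbound : ∀ k, ‖fCoeff d (fun x => 1 / 2 * (f x - g x)) k‖ * logWeight d k ≤
      1 / 2 * (‖fCoeff d f k‖ * logWeight d k + ‖fCoeff d g k‖ * logWeight d k) := fun k => by
    rw [fCoeff_half_sub hf_cont hg_cont, norm_mul, ← add_mul, ← mul_assoc]
    gcongr
    · exact logWeight_nonneg d k
    · norm_num
    · exact norm_sub_le _ _
  have hsum := (hf_sum.add hg_sum).mul_left (1 / 2)
  have hsum_half : Summable fun k =>
      ‖fCoeff d (fun x => 1 / 2 * (f x - g x)) k‖ * logWeight d k :=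
    .of_nonneg_of_le (fun k => mul_nonneg (norm_nonneg _) (logWeight_nonneg d k)) hbound hsum
  refine ⟨by fun_prop, fun x i => by simp only [hf_per x i, hg_per x i], hsum_half, ?_⟩
  refine (hsum_half.tsum_le_tsum hbound hsum).trans ?_
  rw [tsum_mul_left, hf_sum.tsum_add hg_sum]
  linarith

lemma norm_sub_sum_le_of_mem_FdLog (hf : f ∈ FdLog d) {Λ : Finset (Fin d → ℤ)} {R : ℝ} (hR : 0 < R)
    (hΛ : ∀ k ∉ Λ, R ≤ logWeight d k) (x : Fin d → ℝ) :
    ‖f x - ∑ k ∈ Λ, fCoeff d f k * eK d k x‖ ≤ 1 / R := by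
  obtain ⟨hf_cont, hf_per, hf_sum, hf_le⟩ := hf
  have hcoeff : Summable fun k => ‖fCoeff d f k‖ :=
    .of_nonneg_of_le (fun k => norm_nonneg _)
      (fun k => le_mul_of_one_le_right (norm_nonneg _) (one_le_logWeight d k)) hf_sum
  exact norm_sub_sum_le_one_div (fun k => (norm_eK k x).le) (logWeight_nonneg d)
    (hasSum_fCoeff_mul_eK hf_cont hf_per hcoeff x) hf_sum hf_le hR hΛ

lemma norm_le_one_of_mem_FdLog (hf : f ∈ FdLog d) (x : Fin d → ℝ) : ‖f x‖ ≤ 1 := by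
  simpa using norm_sub_sum_le_of_mem_FdLog hf (Λ := ∅) one_pos
    (fun k _ => one_le_logWeight d k) x

lemma sum_norm_fCoeff_le_one (hf : f ∈ FdLog d) (Λ : Finset (Fin d → ℤ)) :
    ∑ k ∈ Λ, ‖fCoeff d f k‖ ≤ 1 := by
  obtain ⟨-, -, hf_sum, hf_le⟩ := hf
  calc ∑ k ∈ Λ, ‖fCoeff d f k‖ ≤ ∑ k ∈ Λ, ‖fCoeff d f k‖ * logWeight d k := by
        gcongr with k
        exact le_mul_of_one_le_right (norm_nonneg _) (one_le_logWeight d k)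
    _ ≤ 1 := (hf_sum.sum_le_tsum Λ fun k _ =>
        mul_nonneg (norm_nonneg _) (logWeight_nonneg d k)).trans hf_le

/-- The frequencies `k` with `‖k‖_∞ ≤ M`, kept by the truncated Fourier series. -/
def frequencyBox (d M : ℕ) : Finset (Fin d → ℤ) :=
  Fintype.piFinset fun _ => Finset.Icc (-M) M

lemma card_frequencyBox (d M : ℕ) : #(frequencyBox d M) = (2 * M + 1) ^ d := by
  rw [frequencyBox, Fintype.card_piFinset_const, Int.card_Icc]
  congr 1
  omega

lemma log_le_logWeight_of_notMem_frequencyBox {M : ℕ} {k : Fin d → ℤ}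
    (hk : k ∉ frequencyBox d M) : log M ≤ logWeight d k := by
  have hcoord : ∃ i, M < (k i).natAbs := by
    contrapose! hk
    simp only [frequencyBox, Fintype.mem_piFinset, Finset.mem_Icc]
    intro i
    have := hk i
    omega
  obtain ⟨i, hi⟩ := hcoord
  have hM_le : M ≤ Finset.univ.sup fun i => (k i).natAbs :=
    hi.le.trans (Finset.le_sup (f := fun i => (k i).natAbs) (Finset.mem_univ i))
  refine le_max_of_le_right ?_
  rcases M.eq_zero_or_pos with rfl | hM
  · simp only [Nat.cast_zero, log_zero, log_natCast_nonneg]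
  · gcongr

lemma log_card_frequencyBox_ceil_exp_le (hd : d ≠ 0) {R : ℝ} (hR : 2 ≤ R) :
    log (4 * #(frequencyBox d ⌈exp R⌉₊) + 1) ≤ 13 * d * R := by
  set M := ⌈exp R⌉₊
  have hM : (2 * M + 1 : ℝ) ≤ 5 * exp R := by
    linarith [Nat.ceil_lt_add_one (exp_pos R).le, one_le_exp (x := R) (by linarith)]
  have hbase : (4 * (2 * M + 1) ^ d + 1 : ℝ) ≤ (25 * exp R) ^ d := by
    calc (4 * (2 * M + 1) ^ d + 1 : ℝ) ≤ 5 * (2 * M + 1) ^ d := by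
          linarith [one_le_pow₀ (n := d) (by linarith [M.cast_nonneg (α := ℝ)] :
            (1 : ℝ) ≤ 2 * M + 1)]
      _ ≤ 5 ^ d * (5 * exp R) ^ d := by
          gcongr
          exact le_self_pow₀ (by norm_num) hd
      _ = (25 * exp R) ^ d := by
          rw [← mul_pow]
          ring_nf
  have hlog25 : log 25 ≤ 12 * R := by
    linarith [log_le_sub_one_of_pos (by norm_num : (0 : ℝ) < 25)]
  rw [card_frequencyBox]
  push_cast
  calc log (4 * (2 * M + 1) ^ d + 1) ≤ log ((25 * exp R) ^ d) := by gcongr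
    _ = d * (log 25 + R) := by rw [log_pow, log_mul (by norm_num) (exp_pos R).ne', log_exp]
    _ ≤ d * (12 * R + R) := by gcongr
    _ = 13 * d * R := by ring

/-- A number of nodes that recovers `FdLog d` up to an `L²` error of order `(1 / 2) ^ J`. It is the
product of `J ^ 2 * 4 ^ J` and of `d * 2 ^ J`, the order of the logarithm of the number of
frequencies needed to approximate the class up to `(1 / 2) ^ J`. The constant is
`8 * (1024 * 13 + 1)`, with `1024` from `levelLength` and `13` from
`log_card_frequencyBox_ceil_exp_le`. -/
def nodeCount (d J : ℕ) : ℕ := 106504 * d * J ^ 2 * 8 ^ J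

lemma exists_nodes_integral_norm_sq_le (hd : d ≠ 0) {J : ℕ} (hJ : J ≠ 0) :
    ∃ x : Fin (nodeCount d J) → (Fin d → ℝ), (∀ i, x i ∈ cube d) ∧
      ∀ h ∈ FdLog d, (∀ i, h (x i) = 0) → ∫ y in cube d, ‖h y‖ ^ 2 ≤ 42 * (1 / 4) ^ J := by
  have h2J : (2 : ℝ) ≤ 2 ^ J := le_self_pow₀ one_le_two hJ
  set Λ := frequencyBox d ⌈exp (2 ^ J)⌉₊
  have hΛ_weight : ∀ k ∉ Λ, (2 : ℝ) ^ J ≤ logWeight d k := fun k hk =>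
    ((le_log_iff_exp_le (by positivity)).mpr (Nat.le_ceil _)).trans
      (log_le_logWeight_of_notMem_frequencyBox hk)
  have hcard : 8 * J ^ 2 * 4 ^ J * (1024 * log (4 * Fintype.card Λ + 1) + 1) ≤
      Fintype.card (Fin (nodeCount d J)) := by
    have hd_one : (1 : ℝ) ≤ d := mod_cast Nat.one_le_iff_ne_zero.mpr hd
    rw [Fintype.card_coe, Fintype.card_fin, nodeCount]
    push_cast
    calc (8 : ℝ) * J ^ 2 * 4 ^ J * (1024 * log (4 * #Λ + 1) + 1)
        ≤ 8 * J ^ 2 * 4 ^ J * (1024 * (13 * d * 2 ^ J) + d * 2 ^ J) := by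
          gcongr
          · exact log_card_frequencyBox_ceil_exp_le hd h2J
          · exact one_le_mul_of_one_le_of_one_le hd_one (by linarith)
      _ = (106504 : ℝ) * d * J ^ 2 * (4 * 2) ^ J := by
          rw [mul_pow]
          ring
      _ = 106504 * d * J ^ 2 * 8 ^ J := by norm_num
  obtain ⟨x, hx⟩ := exists_sample_integral_norm_sq_le_of_approx (volume.restrict (cube d))
    (e := fun (k : Λ) => eK d k) (fun k => measurable_eK _) (fun k y => (norm_eK _ y).le) hJ hcard
  refine ⟨fun i j => Int.fract (x i j), fun i j _ => ⟨Int.fract_nonneg _, (Int.fract_lt_one _).le⟩,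
    fun h hh hzero => hx (fun k => fCoeff d h k) h ?_ (fun y => ?_) fun i => ?_⟩
  · simpa only [Finset.sum_coe_sort Λ fun k => ‖fCoeff d h k‖] using sum_norm_fCoeff_le_one hh Λ
  · simpa only [Finset.sum_coe_sort Λ fun k => fCoeff d h k * eK d k y, one_div_pow] using
      norm_sub_sum_le_of_mem_FdLog hh (by positivity) hΛ_weight y
  · rw [← Periodic1.apply_fract hh.2.1, hzero]

end LogWeightClass

section Recovery

lemma exists_forall_apply_of_agree {V W : Type*} [Nonempty V] {F : Set V} {S : V → W}
    {P : V → V → Prop} (h : ∀ f ∈ F, ∀ g ∈ F, S f = S g → P f g) :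
    ∃ φ : W → V, ∀ f ∈ F, P f (φ (S f)) :=
  ⟨Function.invFunOn S F, fun f hf =>
    have hex : ∃ g ∈ F, S g = S f := ⟨f, hf, rfl⟩
    h f hf _ (Function.invFunOn_mem hex) (Function.invFunOn_eq hex).symm⟩

lemma eLpNorm_le_ofReal_integral_norm_sq_rpow {X : Type*} [MeasurableSpace X] {μ : Measure X}
    [IsFiniteMeasure μ] {p : ℝ} (hp : 2 ≤ p) {h : X → ℂ} (hh : AEStronglyMeasurable h μ)
    (hh_le : ∀ y, ‖h y‖ ≤ 1) :
    eLpNorm h (ENNReal.ofReal p) μ ≤ ENNReal.ofReal ((∫ y, ‖h y‖ ^ 2 ∂μ) ^ p⁻¹) := by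
  have hp_pos : 0 < p := by linarith
  have hsq : Integrable (fun y => ‖h y‖ ^ 2) μ :=
    .of_bound (by fun_prop) 1 (.of_forall fun y => by
      simpa only [norm_pow, norm_norm] using pow_le_one₀ (n := 2) (norm_nonneg _) (hh_le y))
  rw [(MemLp.of_bound hh 1 (.of_forall hh_le)).eLpNorm_eq_integral_rpow_norm
    (by simpa using hp_pos) ENNReal.ofReal_ne_top, ENNReal.toReal_ofReal hp_pos.le]
  gcongr ENNReal.ofReal (?_ ^ p⁻¹)
  refine integral_mono_of_nonneg (.of_forall fun y => by positivity) hsq (.of_forall fun y => ?_)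
  simpa only [rpow_two] using
    rpow_le_rpow_of_exponent_ge' (norm_nonneg _) (hh_le y) zero_le_two hp

lemma eLpNorm_sub_le_of_mem_FdLog {d : ℕ} {f g : (Fin d → ℝ) → ℂ} (hf : f ∈ FdLog d)
    (hg : g ∈ FdLog d) {p : ℝ} (hp : 2 ≤ p) :
    eLpNorm (fun t => f t - g t) (ENNReal.ofReal p) (volume.restrict (cube d)) ≤
      ENNReal.ofReal (2 * (∫ t in cube d, ‖1 / 2 * (f t - g t)‖ ^ 2) ^ p⁻¹) := by
  have hhalf := half_sub_mem_FdLog hf hg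
  have hdouble : (fun t => f t - g t) = (2 : ℂ) • fun t => 1 / 2 * (f t - g t) := by
    ext t
    simp
  rw [hdouble, eLpNorm_const_smul, ENNReal.ofReal_mul zero_le_two]
  gcongr
  · rw [← ofReal_norm, Complex.norm_ofNat]
  · exact eLpNorm_le_ofReal_integral_norm_sq_rpow hp hhalf.1.aestronglyMeasurable
      (norm_le_one_of_mem_FdLog hhalf)

lemma two_mul_rpow_inv_le {p ε : ℝ} (hp : 0 < p) (hε : 0 < ε) {J : ℕ}
    (hJ : 42 * 2 ^ p * ε ^ (-p) ≤ 4 ^ J) {a : ℝ} (ha_nonneg : 0 ≤ a) (ha : a ≤ 42 * (1 / 4) ^ J) :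
    2 * a ^ p⁻¹ ≤ ε := by
  suffices a ≤ (ε / 2) ^ p by
    have := rpow_inv_le_iff_of_pos ha_nonneg (by positivity : 0 ≤ ε / 2) hp |>.mpr this
    linarith
  have hεp : 0 < ε ^ p := by positivity
  rw [rpow_neg hε.le, ← div_eq_mul_inv, div_le_iff₀ hεp] at hJ
  refine ha.trans ?_
  rw [div_rpow hε.le zero_le_two, le_div_iff₀ (by positivity), one_div_pow, mul_one_div,
    div_mul_eq_mul_div, div_le_iff₀ (by positivity)]
  linarith

lemma exists_sampling_algorithm {d : ℕ} (hd : d ≠ 0) {p ε : ℝ} (hp : 2 ≤ p) (hε : 0 < ε) {J : ℕ}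
    (hJ : J ≠ 0) (hJε : 42 * 2 ^ p * ε ^ (-p) ≤ 4 ^ J) :
    ∃ (x : Fin (nodeCount d J) → (Fin d → ℝ))
      (φ : (Fin (nodeCount d J) → ℂ) → ((Fin d → ℝ) → ℂ)), (∀ i, x i ∈ cube d) ∧
      ∀ f ∈ FdLog d, eLpNorm (fun t => f t - φ (fun i => f (x i)) t) (ENNReal.ofReal p)
        (volume.restrict (cube d)) ≤ ENNReal.ofReal ε := by
  obtain ⟨x, hx_mem, hx⟩ := exists_nodes_integral_norm_sq_le hd hJ
  have hagree : ∀ f ∈ FdLog d, ∀ g ∈ FdLog d, (fun i => f (x i)) = (fun i => g (x i)) →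
      eLpNorm (fun t => f t - g t) (ENNReal.ofReal p) (volume.restrict (cube d)) ≤
        ENNReal.ofReal ε := fun f hf g hg hfg => by
    refine (eLpNorm_sub_le_of_mem_FdLog hf hg hp).trans (ENNReal.ofReal_le_ofReal ?_)
    exact two_mul_rpow_inv_le (by linarith) hε hJε (integral_nonneg fun t => by positivity)
      (hx _ (half_sub_mem_FdLog hf hg) fun i => by simp [congrFun hfg i])
  obtain ⟨φ, hφ⟩ := exists_forall_apply_of_agree hagree
  exact ⟨x, φ, hx_mem, hφ⟩

end Recovery

section Parameters

lemma exists_four_pow_mem_Icc {A : ℝ} (hA : 1 ≤ A) : ∃ J ≠ 0, (4 : ℝ) ^ J ∈ Set.Icc A (4 * A) := by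
  obtain ⟨n, hn_le, hn_lt⟩ := exists_nat_pow_near hA (by norm_num : (1 : ℝ) < 4)
  exact ⟨n + 1, n.succ_ne_zero, hn_lt.le, by rw [pow_succ']; gcongr⟩

lemma one_le_log_four : 1 ≤ log 4 := by
  rw [le_log_iff_exp_le (by norm_num)]
  linarith [exp_one_lt_d9]

lemma sq_mul_eight_pow_le {J : ℕ} {B : ℝ} (hB : 4 ^ J ≤ B) :
    J ^ 2 * 8 ^ J ≤ log B ^ 2 * B ^ (3 / 2 : ℝ) := by
  have hJ_le : (J : ℝ) ≤ log B := by
    calc (J : ℝ) ≤ J * log 4 := le_mul_of_one_le_right J.cast_nonneg one_le_log_four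
      _ = log (4 ^ J) := by rw [log_pow]
      _ ≤ log B := by gcongr
  have hpow : (8 : ℝ) ^ J = (4 ^ J) ^ (3 / 2 : ℝ) := by
    rw [← rpow_pow_comm (by norm_num), show (4 : ℝ) = 2 ^ (2 : ℝ) by norm_num,
      ← rpow_mul zero_le_two]
    norm_num
  rw [hpow]
  gcongr

lemma one_le_log_rpow_neg {p ε : ℝ} (hp : 2 ≤ p) (hε : ε ∈ Set.Ioo (0 : ℝ) (1 / 2)) :
    1 ≤ log (ε ^ (-p)) := by
  have hlog : log 2 ≤ -log ε := by
    rw [← log_inv]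
    exact log_le_log two_pos ((le_inv_comm₀ two_pos hε.1).mpr (by linarith [hε.2]))
  rw [log_rpow hε.1, neg_mul, ← mul_neg]
  nlinarith [log_two_gt_d9]

lemma log_sq_mul_rpow_le {K p ε : ℝ} (hK : 1 ≤ K) (hε : 0 < ε) (hlog : 1 ≤ log (ε ^ (-p))) :
    log (K * ε ^ (-p)) ^ 2 * (K * ε ^ (-p)) ^ (3 / 2 : ℝ) ≤
      (log K + 1) ^ 2 * K ^ (3 / 2 : ℝ) * ε ^ (-(3 * p) / 2) * log (ε ^ (-p)) ^ 2 := by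
  have hlogK : 0 ≤ log K := log_nonneg hK
  have hεp : 0 < ε ^ (-p) := by positivity
  have hlog_le : log (K * ε ^ (-p)) ≤ (log K + 1) * log (ε ^ (-p)) := by
    rw [log_mul (by positivity) hεp.ne']
    nlinarith
  have hlog_nonneg : 0 ≤ log (K * ε ^ (-p)) := by
    rw [log_mul (by positivity) hεp.ne']
    linarith
  have hrpow : (K * ε ^ (-p)) ^ (3 / 2 : ℝ) = K ^ (3 / 2 : ℝ) * ε ^ (-(3 * p) / 2) := by
    rw [mul_rpow (by positivity) hεp.le, ← rpow_mul hε.le]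
    ring_nf
  calc log (K * ε ^ (-p)) ^ 2 * (K * ε ^ (-p)) ^ (3 / 2 : ℝ)
      ≤ ((log K + 1) * log (ε ^ (-p))) ^ 2 * (K ^ (3 / 2 : ℝ) * ε ^ (-(3 * p) / 2)) := by
        rw [hrpow]
        gcongr
    _ = (log K + 1) ^ 2 * K ^ (3 / 2 : ℝ) * ε ^ (-(3 * p) / 2) * log (ε ^ (-p)) ^ 2 := by ring

end Parameters

theorem statement4_general (p : ℝ) (hp : 2 ≤ p) :
    ∃ c : ℝ, 0 < c ∧ ∀ (d : ℕ) (ε : ℝ), 1 ≤ d → ε ∈ Set.Ioo (0 : ℝ) (1/2) →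
      ∃ n : ℕ, (n : ℝ) ≤ c * d * ε ^ (-(3 * p) / 2) * Real.log (ε ^ (-p)) ^ 2 ∧
        ∃ (x : Fin n → (Fin d → ℝ)) (φ : (Fin n → ℂ) → ((Fin d → ℝ) → ℂ)),
          (∀ i, x i ∈ cube d) ∧
          ∀ f ∈ FdLog d,
            eLpNorm (fun t => f t - φ (fun i => f (x i)) t) (ENNReal.ofReal p)
              (volume.restrict (cube d)) ≤ ENNReal.ofReal ε := by
  set K : ℝ := 4 * (42 * 2 ^ p) with hK_def
  have hK : 4 ≤ K := by linarith [one_le_rpow one_le_two (by linarith : 0 ≤ p)]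
  have hlogK : 0 ≤ log K := log_nonneg (by linarith)
  refine ⟨106504 * ((log K + 1) ^ 2 * K ^ (3 / 2 : ℝ)), by positivity, fun d ε hd hε => ?_⟩
  have hlog := one_le_log_rpow_neg hp hε
  have hεp : 1 ≤ ε ^ (-p) := one_le_rpow_of_pos_of_le_one_of_nonpos hε.1
    (by linarith [hε.2]) (by linarith)
  obtain ⟨J, hJ, hJ_ge, hJ_le⟩ := exists_four_pow_mem_Icc (A := 42 * 2 ^ p * ε ^ (-p))
    (one_le_mul_of_one_le_of_one_le (by linarith) hεp)
  refine ⟨nodeCount d J, ?_, exists_sampling_algorithm (by omega) hp hε.1 hJ hJ_ge⟩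
  have hJ_le_K : 4 ^ J ≤ K * ε ^ (-p) := hJ_le.trans_eq (by rw [hK_def]; ring)
  calc (nodeCount d J : ℝ) = 106504 * d * (J ^ 2 * 8 ^ J) := by
        rw [nodeCount]
        push_cast
        ring
    _ ≤ 106504 * d * (log (K * ε ^ (-p)) ^ 2 * (K * ε ^ (-p)) ^ (3 / 2 : ℝ)) := by
        gcongr ?_ * ?_
        exact sq_mul_eight_pow_le hJ_le_K
    _ ≤ 106504 * d * ((log K + 1) ^ 2 * K ^ (3 / 2 : ℝ) * ε ^ (-(3 * p) / 2) *
          log (ε ^ (-p)) ^ 2) := by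
        gcongr ?_ * ?_
        exact log_sq_mul_rpow_le (by linarith) hε.1 hlog
    _ = _ := by ring

/-- Corollary `cor:Goda`: for `2 ≤ p < ∞` there is a constant `c > 0`
(depending only on `p`) such that for all `d ≥ 2` and `ε ∈ (0,1/2)`,
`n(ε, F_d^log, L_p) ≤ c d ε^{-3p/2} log³(ε^{-p})`. -/
theorem statement4 :
    ∀ p : ℝ, 2 ≤ p →
      ∃ c : ℝ, 0 < c ∧
        ∀ (d : ℕ) (ε : ℝ), 2 ≤ d → ε ∈ Set.Ioo (0 : ℝ) (1/2) →
          ∃ n : ℕ, (n : ℝ) ≤ c * d * ε ^ (-(3 * p) / 2) * Real.log (ε ^ (-p)) ^ 3 ∧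
            ∃ (x : Fin n → (Fin d → ℝ)) (φ : (Fin n → ℂ) → ((Fin d → ℝ) → ℂ)),
              (∀ i, x i ∈ cube d) ∧
              ∀ f ∈ FdLog d,
                eLpNorm (fun t => f t - φ (fun i => f (x i)) t) (ENNReal.ofReal p)
                    (volume.restrict (cube d))
                  ≤ ENNReal.ofReal ε := by
  intro p hp
  obtain ⟨c, hc, hgeneral⟩ := statement4_general p hp
  refine ⟨c, hc, fun d ε hd hε => ?_⟩
  obtain ⟨n, hn, halgorithm⟩ := hgeneral d ε (by omega) hε
  refine ⟨n, hn.trans ?_, halgorithm⟩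
  have hε_pos := hε.1
  gcongr
  · exact one_le_log_rpow_neg hp hε
  · norm_num
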